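/- Let 0 < s' ≤ s and let Ω ⊆ ℝⁿ be a convex open set. Then F^s(Ω) ⊆ F^{s'}(Ω), and for every F ∈ F^s(Ω) one has ‖F‖_{Ḟ^{s'}(Ω)} ≤ max{‖F‖_{Ḟ^s(Ω)}, ‖F‖_{L^∞(Ω)}}. -/

import Mathlib

open Set ENNReal
open scoped NNReal

noncomputable section

/-- The largest integer strictly less than `s` (for `s > 0`). -/
def lowFloor (s : ℝ) : ℕ := ⌈s⌉₊ - 1

variable {E : Type*} [NormedAddCommGroup E] [NormedSpace ℝ E]

/-- `max_{0 ≤ m < s} sup_{x ∈ Ω} |∇^m F(x)|`, valued in `ℝ≥0∞`. -/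
def derivSup (s : ℝ) (Ω : Set E) (F : E → ℝ) : ℝ≥0∞ :=
  ⨆ (m : ℕ) (_ : m ≤ lowFloor s) (x : E) (_ : x ∈ Ω),
    (‖iteratedFDerivWithin ℝ m F Ω x‖₊ : ℝ≥0∞)

/-- The homogeneous Hölder seminorm `‖F‖_{Ċ^s(Ω)}`, valued in `ℝ≥0∞`. -/
def holderSemi (s : ℝ) (Ω : Set E) (F : E → ℝ) : ℝ≥0∞ :=
  ⨆ (x : E) (_ : x ∈ Ω) (y : E) (_ : y ∈ Ω) (_ : x ≠ y),
    (‖iteratedFDerivWithin ℝ (lowFloor s) F Ω x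
        - iteratedFDerivWithin ℝ (lowFloor s) F Ω y‖₊ : ℝ≥0∞)
      / ENNReal.ofReal (‖x - y‖ ^ (s - (lowFloor s : ℝ)))

/-- The Hölder norm `‖F‖_{C^s(Ω)}`, valued in `ℝ≥0∞`. -/
def csNorm (s : ℝ) (Ω : Set E) (F : E → ℝ) : ℝ≥0∞ :=
  derivSup s Ω F + holderSemi s Ω F

/-- Membership in `C^s(Ω)`. -/
def MemCs (s : ℝ) (Ω : Set E) (F : E → ℝ) : Prop :=
  ContDiffOn ℝ (lowFloor s : ℕ∞) F Ω ∧ csNorm s Ω F ≠ ∞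

/-- The flat seminorm `‖F‖_{Ḟ^s(Ω)}`, valued in `ℝ≥0∞`.  (In `ℝ≥0∞` one has
`0/0 = 0` and `a/0 = ∞` for `a ≠ 0`, matching the paper's conventions; for
`0 < s < 1` the supremum is empty, hence `0`.) -/
def flatSemi (s : ℝ) (Ω : Set E) (F : E → ℝ) : ℝ≥0∞ :=
  ⨆ (m : ℕ) (_ : 1 ≤ m) (_ : m ≤ lowFloor s) (x : E) (_ : x ∈ Ω),
    ((‖iteratedFDerivWithin ℝ m F Ω x‖₊ : ℝ≥0∞) ^ s
      / ENNReal.ofReal (F x) ^ (s - (m : ℝ))) ^ (1 / (m : ℝ))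

/-- Membership in the cone `F^s(Ω)`. -/
def MemFs (s : ℝ) (Ω : Set E) (F : E → ℝ) : Prop :=
  MemCs s Ω F ∧ (∀ x ∈ Ω, 0 ≤ F x) ∧ flatSemi s Ω F ≠ ∞

/-- The norm `‖F‖_{F^s(Ω)} = ‖F‖_{C^s(Ω)} + ‖F‖_{Ḟ^s(Ω)}`. -/
def fsNorm (s : ℝ) (Ω : Set E) (F : E → ℝ) : ℝ≥0∞ :=
  csNorm s Ω F + flatSemi s Ω F

/-- `sup_{x ∈ Ω} |F(x)|`, valued in `ℝ≥0∞`. -/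
def supNormSet (Ω : Set E) (F : E → ℝ) : ℝ≥0∞ :=
  ⨆ (x : E) (_ : x ∈ Ω), (‖F x‖₊ : ℝ≥0∞)

/-- `P` is (the function given by) a polynomial of degree at most `D`. -/
def IsPolyDeg (D : ℕ) (P : E → ℝ) : Prop :=
  ContDiff ℝ (⊤ : ℕ∞) P ∧ ∀ x, iteratedFDeriv ℝ (D + 1) P x = 0

/-- The degree-`D` Taylor polynomial (jet) of `F` at `x`, as a function. -/
def jetAt (D : ℕ) (F : E → ℝ) (x : E) : E → ℝ :=
  fun y => ∑ m ∈ Finset.range (D + 1),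
    (iteratedFDeriv ℝ m F x fun _ => y - x) / m.factorial

/-- The degree-`D` Taylor polynomial of `F` at `x` using derivatives within `Ω`. -/
def jetWithinAt (D : ℕ) (F : E → ℝ) (Ω : Set E) (x : E) : E → ℝ :=
  fun y => ∑ m ∈ Finset.range (D + 1),
    (iteratedFDerivWithin ℝ m F Ω x fun _ => y - x) / m.factorial

/-- The pointwise flatness quantity `max_{1≤m<s} (|∇^m P(x)|^s / P(x)^{s-m})^{1/m}`. -/
def jetFlatAt (s : ℝ) (P : E → ℝ) (x : E) : ℝ≥0∞ :=
  ⨆ (m : ℕ) (_ : 1 ≤ m) (_ : m ≤ lowFloor s),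
    ((‖iteratedFDeriv ℝ m P x‖₊ : ℝ≥0∞) ^ s
      / ENNReal.ofReal (P x) ^ (s - (m : ℝ))) ^ (1 / (m : ℝ))

/-- The set `Γ(x₀, M)` of flat nonnegative jets. -/
def Gamma (s : ℝ) (x₀ : E) (M : ℝ) : Set (E → ℝ) :=
  {P | IsPolyDeg (lowFloor s) P ∧ 0 ≤ P x₀ ∧
    (∀ m ≤ lowFloor s, ‖iteratedFDeriv ℝ m P x₀‖ ≤ M) ∧
    jetFlatAt s P x₀ ≤ ENNReal.ofReal M}

/-- `‖P⃗‖_{J C^s(E)}` for a family of jets `P : E → (E → ℝ)`. -/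
def jetCNorm (s : ℝ) (Eset : Set E) (P : E → E → ℝ) : ℝ≥0∞ :=
  (⨆ (x : E) (_ : x ∈ Eset) (m : ℕ) (_ : m ≤ lowFloor s),
      (‖iteratedFDeriv ℝ m (P x) x‖₊ : ℝ≥0∞))
  + ⨆ (x : E) (_ : x ∈ Eset) (y : E) (_ : y ∈ Eset) (_ : x ≠ y)
      (m : ℕ) (_ : m ≤ lowFloor s),
      (‖iteratedFDeriv ℝ m (P x - P y) y‖₊ : ℝ≥0∞)
        / ENNReal.ofReal (‖x - y‖ ^ (s - (m : ℝ)))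

/-- `‖P⃗‖_{J Ḟ^s(E)}` for a family of jets. -/
def jetFlatNorm (s : ℝ) (Eset : Set E) (P : E → E → ℝ) : ℝ≥0∞ :=
  ⨆ (x : E) (_ : x ∈ Eset) (m : ℕ) (_ : 1 ≤ m) (_ : m ≤ lowFloor s),
    ((‖iteratedFDeriv ℝ m (P x) x‖₊ : ℝ≥0∞) ^ s
      / ENNReal.ofReal |P x x| ^ (s - (m : ℝ))) ^ (1 / (m : ℝ))

/-- `‖P⃗‖_{J F^s(E)}`. -/
def jetFsNorm (s : ℝ) (Eset : Set E) (P : E → E → ℝ) : ℝ≥0∞ :=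
  jetCNorm s Eset P + jetFlatNorm s Eset P

/-- The trace norm `‖f‖_{F^s(S)}` (with `inf ∅ = ∞`). -/
def traceNorm (s : ℝ) (S : Set E) (f : E → ℝ) : ℝ≥0∞ :=
  ⨅ (F : E → ℝ) (_ : MemFs s (univ : Set E) F ∧ ∀ x ∈ S, F x = f x),
    fsNorm s (univ : Set E) F


/-! For `0 < f < ∞` one has `(d ^ s / f ^ (s - m)) ^ (1 / m) = f * (d / f) ^ (s / m)`. If `d ≤ f`,
this is at most `f` for every `s ≥ 0`; if `f ≤ d`, it is increasing in `s`. Hence lowering `s` never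
pushes the flat seminorm above the maximum of its old value and the supremum of `F`.

The Hölder part uses convexity. If `lowFloor s' < lowFloor s`, the derivative of order `lowFloor s'`
is Lipschitz by the mean value inequality; otherwise it is Hölder with the exponent belonging to
`s`. Being also bounded, it is Hölder with every smaller exponent. -/

theorem lowFloor_mono : Monotone lowFloor := fun _ _ h =>
  Nat.sub_le_sub_right (Nat.ceil_mono h) 1

theorem lowFloor_lt {s : ℝ} (hs : 0 < s) : (lowFloor s : ℝ) < s :=
  Nat.lt_ceil.1 (Nat.sub_lt (Nat.ceil_pos.2 hs) one_pos)

theorem le_lowFloor_add_one (s : ℝ) : s ≤ lowFloor s + 1 := by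
  have hceil : ⌈s⌉₊ ≤ lowFloor s + 1 := le_tsub_add
  exact_mod_cast (Nat.le_ceil s).trans (Nat.cast_le.2 hceil)

section FlatQuotient

/-- The quantity whose supremum over `1 ≤ m < s` and `x ∈ Ω` is the flat seminorm, where `d` stands
for `|∇^m F(x)|` and `f` for `F(x)`. It takes values in `ℝ≥0∞`, where `0 / 0 = 0` and `d / 0 = ∞`
for `d ≠ 0`. -/
def flatQuotient (s m : ℝ) (d f : ℝ≥0∞) : ℝ≥0∞ :=
  (d ^ s / f ^ (s - m)) ^ (1 / m)

variable {s s' m : ℝ} {d f : ℝ≥0∞}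

theorem flatQuotient_eq_mul_div_rpow (hm : 0 < m) (hs : 0 ≤ s) (hf₀ : f ≠ 0) (hf : f ≠ ∞) :
    flatQuotient s m d f = f * (d / f) ^ (s / m) := by
  have hexp : (s - m) * (1 / m) = s / m - 1 := by field_simp
  calc flatQuotient s m d f
      = d ^ (s / m) / f ^ (s / m - 1) := by
        rw [flatQuotient, ENNReal.div_rpow_of_nonneg _ _ (by positivity), ← ENNReal.rpow_mul,
          ← ENNReal.rpow_mul, hexp, mul_one_div]
    _ = d ^ (s / m) * f ^ (1 - s / m) := by
        rw [div_eq_mul_inv, ← ENNReal.rpow_neg, neg_sub]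
    _ = f * (d / f) ^ (s / m) := by
        rw [ENNReal.rpow_sub _ _ hf₀ hf, ENNReal.rpow_one,
          ENNReal.div_rpow_of_nonneg _ _ (by positivity), ← mul_div_assoc, ← mul_div_assoc,
          mul_comm]

theorem flatQuotient_zero_left (hm : 0 < m) (hs : 0 < s) : flatQuotient s m 0 f = 0 := by
  simp [flatQuotient, ENNReal.zero_rpow_of_pos hs, hm]

theorem flatQuotient_zero_right (hm : 0 < m) (hms : m < s) (hd : d ≠ 0) :
    flatQuotient s m d 0 = ∞ := by
  have hds : d ^ s ≠ 0 := by simp [hd, (hm.trans hms).le]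
  rw [flatQuotient, ENNReal.zero_rpow_of_pos (sub_pos.2 hms), ENNReal.div_zero hds,
    ENNReal.top_rpow_of_pos (one_div_pos.2 hm)]

theorem flatQuotient_le_max (hm : 0 < m) (hms' : m < s') (hss : s' ≤ s) :
    flatQuotient s' m d f ≤ max (flatQuotient s m d f) f := by
  have hs' : 0 < s' := hm.trans hms'
  have hs : 0 < s := hs'.trans_le hss
  rcases eq_or_ne f ∞ with rfl | hf
  · exact le_max_of_le_right le_top
  rcases eq_or_ne f 0 with rfl | hf₀
  · rcases eq_or_ne d 0 with rfl | hd
    · simp [flatQuotient_zero_left hm hs']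
    · simp [flatQuotient_zero_right hm (hms'.trans_le hss) hd]
  rw [flatQuotient_eq_mul_div_rpow hm hs'.le hf₀ hf, flatQuotient_eq_mul_div_rpow hm hs.le hf₀ hf]
  rcases le_total (d / f) 1 with hdf | hdf
  · exact le_max_of_le_right (mul_le_of_le_one_right' (ENNReal.rpow_le_one hdf (by positivity)))
  · exact le_max_of_le_left (by gcongr)

end FlatQuotient

section Holder

theorem holderOnWith_zero_of_nnnorm_le {X V : Type*} [PseudoEMetricSpace X]
    [SeminormedAddCommGroup V] {f : X → V} {A : Set X} {C : ℝ≥0} (hf : ∀ x ∈ A, ‖f x‖₊ ≤ C) :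
    HolderOnWith (C + C) 0 f A := by
  intro x hx y hy
  rw [NNReal.coe_zero, ENNReal.rpow_zero, mul_one, edist_nndist, nndist_eq_nnnorm]
  exact_mod_cast (nnnorm_sub_le _ _).trans (add_le_add (hf x hx) (hf y hy))

theorem lipschitzOnWith_iteratedFDerivWithin {V : Type*} [NormedAddCommGroup V] [NormedSpace ℝ V]
    {Ω : Set E} (hconv : Convex ℝ Ω) (huniq : UniqueDiffOn ℝ Ω) {F : E → V} {N : WithTop ℕ∞}
    (hF : ContDiffOn ℝ N F Ω) {k : ℕ} (hk : k < N) {C : ℝ≥0}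
    (hC : ∀ x ∈ Ω, ‖iteratedFDerivWithin ℝ (k + 1) F Ω x‖₊ ≤ C) :
    LipschitzOnWith C (iteratedFDerivWithin ℝ k F Ω) Ω := by
  refine hconv.lipschitzOnWith_of_nnnorm_fderivWithin_le (𝕜 := ℝ)
    (hF.differentiableOn_iteratedFDerivWithin hk huniq) fun x hx => ?_
  rw [← NNReal.coe_le_coe, coe_nnnorm, norm_fderivWithin_iteratedFDerivWithin]
  exact hC x hx

end Holder

variable {s s' : ℝ} {Ω : Set E} {F : E → ℝ}

theorem enorm_iteratedFDerivWithin_le_derivSup {m : ℕ} (hm : m ≤ lowFloor s) {x : E} (hx : x ∈ Ω) :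
    ‖iteratedFDerivWithin ℝ m F Ω x‖ₑ ≤ derivSup s Ω F :=
  le_iSup₂_of_le m hm (le_iSup₂_of_le x hx le_rfl)

theorem nnnorm_iteratedFDerivWithin_le_toNNReal_derivSup (h : derivSup s Ω F ≠ ∞) {m : ℕ}
    (hm : m ≤ lowFloor s) {x : E} (hx : x ∈ Ω) :
    ‖iteratedFDerivWithin ℝ m F Ω x‖₊ ≤ (derivSup s Ω F).toNNReal :=
  ENNReal.le_toNNReal_of_coe_le (enorm_iteratedFDerivWithin_le_derivSup hm hx) h

theorem derivSup_mono (hss : s' ≤ s) : derivSup s' Ω F ≤ derivSup s Ω F :=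
  iSup₂_le fun m hm => le_iSup₂_of_le m (hm.trans (lowFloor_mono hss)) le_rfl

theorem supNormSet_le_derivSup (s : ℝ) (Ω : Set E) (F : E → ℝ) :
    supNormSet Ω F ≤ derivSup s Ω F :=
  iSup₂_le fun x hx => by
    have hzero : ‖F x‖ₑ = ‖iteratedFDerivWithin ℝ 0 F Ω x‖ₑ := by
      rw [← ofReal_norm, ← ofReal_norm, norm_iteratedFDerivWithin_zero]
    exact hzero.trans_le (enorm_iteratedFDerivWithin_le_derivSup (Nat.zero_le _) hx)

theorem holderSemi_le_coe_iff (hs : 0 < s) {C : ℝ≥0} :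
    holderSemi s Ω F ≤ C ↔
      HolderOnWith C (s - lowFloor s).toNNReal (iteratedFDerivWithin ℝ (lowFloor s) F Ω) Ω := by
  have hα : 0 ≤ s - lowFloor s := sub_nonneg.2 (lowFloor_lt hs).le
  simp only [holderSemi, iSup_le_iff, HolderOnWith, Real.coe_toNNReal _ hα]
  refine forall₄_congr fun x _ y _ => ?_
  rcases eq_or_ne x y with rfl | hxy
  · simp
  have hpos : 0 < ‖x - y‖ ^ (s - lowFloor s : ℝ) :=
    Real.rpow_pos_of_pos (norm_pos_iff.2 (sub_ne_zero.2 hxy)) _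
  rw [forall_prop_of_true hxy,
    ENNReal.div_le_iff (ENNReal.ofReal_pos.2 hpos).ne' ENNReal.ofReal_ne_top,
    ← ENNReal.ofReal_rpow_of_nonneg (norm_nonneg _) hα, ← dist_eq_norm, ← edist_dist,
    edist_eq_enorm_sub (iteratedFDerivWithin ℝ (lowFloor s) F Ω x), enorm_eq_nnnorm]

theorem holderSemi_ne_top_iff (hs : 0 < s) :
    holderSemi s Ω F ≠ ∞ ↔ ∃ C : ℝ≥0,
      HolderOnWith C (s - lowFloor s).toNNReal (iteratedFDerivWithin ℝ (lowFloor s) F Ω) Ω := by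
  simp only [← holderSemi_le_coe_iff hs]
  exact ⟨fun h => ⟨_, (ENNReal.coe_toNNReal h).ge⟩,
    fun ⟨_, hC⟩ => ne_top_of_le_ne_top ENNReal.coe_ne_top hC⟩

theorem MemCs.exists_holderOnWith_iteratedFDerivWithin (hF : MemCs s Ω F) (hs' : 0 < s')
    (hss : s' ≤ s) (hconv : Convex ℝ Ω) (huniq : UniqueDiffOn ℝ Ω) :
    ∃ C θ : ℝ≥0, (s' - lowFloor s').toNNReal ≤ θ ∧
      HolderOnWith C θ (iteratedFDerivWithin ℝ (lowFloor s') F Ω) Ω := by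
  obtain ⟨hdiff, hnorm⟩ := hF
  obtain ⟨hderiv, hholder⟩ := ENNReal.add_ne_top.1 hnorm
  rcases (lowFloor_mono hss).lt_or_eq with hlt | heq
  · refine ⟨_, 1, ?_, (lipschitzOnWith_iteratedFDerivWithin hconv huniq hdiff
      (by exact_mod_cast hlt) fun x hx =>
        nnnorm_iteratedFDerivWithin_le_toNNReal_derivSup hderiv hlt hx).holderOnWith⟩
    exact Real.toNNReal_le_one.2 (sub_le_iff_le_add'.2 (le_lowFloor_add_one s'))
  · obtain ⟨C, hC⟩ := (holderSemi_ne_top_iff (hs'.trans_le hss)).1 hholder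
    rw [← heq] at hC
    exact ⟨C, _, Real.toNNReal_le_toNNReal (sub_le_sub_right hss _), hC⟩

theorem MemCs.of_le (hF : MemCs s Ω F) (hs' : 0 < s') (hss : s' ≤ s) (hconv : Convex ℝ Ω)
    (huniq : UniqueDiffOn ℝ Ω) : MemCs s' Ω F := by
  have hfloor := lowFloor_mono hss
  have hderiv : derivSup s Ω F ≠ ∞ := (ENNReal.add_ne_top.1 hF.2).1
  have hbdd := holderOnWith_zero_of_nnnorm_le fun x (hx : x ∈ Ω) =>
    nnnorm_iteratedFDerivWithin_le_toNNReal_derivSup hderiv hfloor hx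
  obtain ⟨C, θ, hθ, hC⟩ := hF.exists_holderOnWith_iteratedFDerivWithin hs' hss hconv huniq
  have hholder : holderSemi s' Ω F ≠ ∞ :=
    (holderSemi_ne_top_iff hs').2 ⟨_, hbdd.of_le_of_le hC zero_le hθ⟩
  exact ⟨hF.1.of_le (by exact_mod_cast hfloor),
    ENNReal.add_ne_top.2 ⟨ne_top_of_le_ne_top hderiv (derivSup_mono hss), hholder⟩⟩

theorem ofReal_le_supNormSet {X : Type*} {A : Set X} {f : X → ℝ} {x : X} (hx : x ∈ A) :
    ENNReal.ofReal (f x) ≤ supNormSet A f :=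
  (Real.ofReal_le_enorm _).trans (le_iSup₂_of_le x hx le_rfl)

theorem flatQuotient_le_flatSemi {m : ℕ} (hm : 1 ≤ m) (hms : m ≤ lowFloor s) {x : E}
    (hx : x ∈ Ω) :
    flatQuotient s m ‖iteratedFDerivWithin ℝ m F Ω x‖ₑ (ENNReal.ofReal (F x)) ≤ flatSemi s Ω F :=
  le_iSup₂_of_le m hm (le_iSup₂_of_le hms x (le_iSup_of_le hx le_rfl))

theorem flatSemi_le_max (hs' : 0 < s') (hss : s' ≤ s) :
    flatSemi s' Ω F ≤ max (flatSemi s Ω F) (supNormSet Ω F) := by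
  refine iSup₂_le fun m hm => iSup₂_le fun hms' x => iSup_le fun hx => ?_
  have hlt : (m : ℝ) < s' := (Nat.cast_le.2 hms').trans_lt (lowFloor_lt hs')
  exact (flatQuotient_le_max (Nat.cast_pos.2 hm) hlt hss).trans (max_le_max
    (flatQuotient_le_flatSemi hm (hms'.trans (lowFloor_mono hss)) hx) (ofReal_le_supNormSet hx))

theorem statement2_general (hs' : 0 < s') (hss : s' ≤ s) (hconv : Convex ℝ Ω)
    (huniq : UniqueDiffOn ℝ Ω) (hF : MemFs s Ω F) :
    MemFs s' Ω F ∧ flatSemi s' Ω F ≤ max (flatSemi s Ω F) (supNormSet Ω F) := by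
  obtain ⟨hCs, hnonneg, hflat⟩ := hF
  have hle : flatSemi s' Ω F ≤ max (flatSemi s Ω F) (supNormSet Ω F) := flatSemi_le_max hs' hss
  have hsup : supNormSet Ω F ≠ ∞ :=
    ne_top_of_le_ne_top (ENNReal.add_ne_top.1 hCs.2).1 (supNormSet_le_derivSup s Ω F)
  have hflat' : flatSemi s' Ω F ≠ ∞ := (hle.trans_lt (max_lt hflat.lt_top hsup.lt_top)).ne
  exact ⟨⟨hCs.of_le hs' hss hconv huniq, hnonneg, hflat'⟩, hle⟩

/-- Proposition `Fs basic`(B): if `0 < s' ≤ s` then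
`F^s(Ω) ⊆ F^{s'}(Ω)` and `‖F‖_{Ḟ^{s'}(Ω)} ≤ max {‖F‖_{Ḟ^s(Ω)}, ‖F‖_{L^∞(Ω)}}`. -/
theorem statement2 (n : ℕ) (hn : 1 ≤ n) (s s' : ℝ) (hs' : 0 < s') (hss : s' ≤ s) :
    ∀ (Ω : Set (EuclideanSpace ℝ (Fin n))), Convex ℝ Ω → IsOpen Ω →
    ∀ F : EuclideanSpace ℝ (Fin n) → ℝ, MemFs s Ω F →
      MemFs s' Ω F ∧
      flatSemi s' Ω F ≤ max (flatSemi s Ω F) (supNormSet Ω F) :=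
  fun _ hconv hopen _ hF => statement2_general hs' hss hconv hopen.uniqueDiffOn hF

end
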